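/- Let D₄, D₆, D₈, D₁₀ be Lie derivations of L of types ε^∨_{4}, ε^∨_{6}, ε^∨_{8}, ε^∨_{10} respectively (i.e., the cases n = 1, 2, 3, 4). Then the Pollack relation ⁅D₁₀, D₄⁆ − 3 • ⁅D₈, D₆⁆ = 0 holds in the Lie algebra of Lie derivations of L. -/

import Mathlib

/-! A derivation of type `ε^∨` kills `⁅𝖺, 𝖻⁆`, because its value on `𝖻` is an alternating sum that
telescopes under `ad(𝖺)`, and it raises the degree in `𝖻` by one. So the derivation
`D = ⁅D₁₀, D₄⁆ - 3 • ⁅D₈, D₆⁆` kills `⁅𝖺, 𝖻⁆` and raises the degree in `𝖻` by two.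

Such a derivation vanishes as soon as it kills `𝖺`: then `⁅𝖺, D 𝖻⁆ = 0`, and the Fox derivative of
this equation in the free associative algebra, which has no zero divisors, shows that `D 𝖻` has
degree `0` in `𝖻`; but `D 𝖻` has degree `3`.

On `𝖺` the relation is explicit. For `E` of type `ε^∨`, the Leibniz rule and `E ⁅𝖺, 𝖻⁆ = 0` express
`E (ad(𝖺)^k 𝖻)` as a sum of brackets `⁅ad(𝖺)^i 𝖻, ad(𝖺)^j 𝖻⁆` with binomial coefficients. After
substituting these sums, all coefficients cancel by antisymmetry of the bracket. -/

open scoped BigOperators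

noncomputable section

/-- The free Lie algebra over ℚ on two generators. -/
abbrev L2 : Type := FreeLieAlgebra ℚ (Fin 2)

/-- The first generator 𝖺 of the free Lie algebra. -/
def ga : L2 := FreeLieAlgebra.of ℚ 0

/-- The second generator 𝖻 of the free Lie algebra. -/
def gb : L2 := FreeLieAlgebra.of ℚ 1

/-- The adjoint action `ad x : y ↦ ⁅x, y⁆` on the free Lie algebra. -/
def adL (x : L2) : Module.End ℚ L2 := LieAlgebra.ad ℚ L2 x

/-- A Lie derivation `D` of `L2` is of type `ε^∨_{2n+2}` if
`D 𝖺 = ad(𝖺)^{2n+2} 𝖻` and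
`D 𝖻 = (1/2) ∑_{i+j=2n+1} (-1)^i ⁅ad(𝖺)^i 𝖻, ad(𝖺)^j 𝖻⁆`. -/
def IsEpsDual (n : ℕ) (D : LieDerivation ℚ L2 L2) : Prop :=
  D ga = (adL ga ^ (2 * n + 2)) gb ∧
  D gb = (1 / 2 : ℚ) • ∑ i ∈ Finset.range (2 * n + 2),
    ((-1 : ℚ)) ^ i • ⁅(adL ga ^ i) gb, (adL ga ^ (2 * n + 1 - i)) gb⁆

/-- A Lie derivation `D` of `L2` is of type `ε_{2n+2}` (the conjugate of `ε^∨_{2n+2}` by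
the automorphism `𝖺 ↦ 𝖻, 𝖻 ↦ -𝖺`). -/
def IsEps (n : ℕ) (D : LieDerivation ℚ L2 L2) : Prop :=
  D ga = -((1 / 2 : ℚ) • ∑ i ∈ Finset.range (2 * n + 2),
    ((-1 : ℚ)) ^ i • ⁅(adL gb ^ i) ga, (adL gb ^ (2 * n + 1 - i)) ga⁆) ∧
  D gb = -((adL gb ^ (2 * n + 2)) ga)

/-- A Lie derivation is of type `ε₀^∨` if it sends `𝖺 ↦ 𝖻` and `𝖻 ↦ 0`. -/
def IsEpsZeroDual (D : LieDerivation ℚ L2 L2) : Prop :=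
  D ga = gb ∧ D gb = 0

/-- A Lie derivation is of type `ε₀` if it sends `𝖺 ↦ 0` and `𝖻 ↦ -𝖺`. -/
def IsEpsZero (D : LieDerivation ℚ L2 L2) : Prop :=
  D ga = 0 ∧ D gb = -ga

section FreeLieAlgebraDerivations

open FreeLieAlgebra

attribute [local instance] LieRing.ofAssociativeRing

variable {R X : Type*} [CommRing R]

theorem lieSpan_range_of :
    LieSubalgebra.lieSpan R (FreeLieAlgebra R X) (Set.range (of R)) = ⊤ := by
  let S := LieSubalgebra.lieSpan R (FreeLieAlgebra R X) (Set.range (of R))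
  let retraction : FreeLieAlgebra R X →ₗ⁅R⁆ S :=
    lift R fun i ↦ ⟨of R i, LieSubalgebra.subset_lieSpan ⟨i, rfl⟩⟩
  have incl_comp_retraction : S.incl.comp retraction = LieHom.id :=
    hom_ext fun i ↦ by simp [retraction]
  refine eq_top_iff.2 fun x _ ↦ ?_
  have hx : (retraction x : FreeLieAlgebra R X) = x := LieHom.congr_fun incl_comp_retraction x
  exact hx ▸ (retraction x).2

@[elab_as_elim]
theorem freeLieAlgebra_induction {p : FreeLieAlgebra R X → Prop} (of : ∀ i, p (of R i))
    (zero : p 0) (add : ∀ u v, p u → p v → p (u + v)) (smul : ∀ (c : R) u, p u → p (c • u))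
    (lie : ∀ u v, p u → p v → p ⁅u, v⁆) (u : FreeLieAlgebra R X) : p u := by
  have hu : u ∈ LieSubalgebra.lieSpan R _ (Set.range (FreeLieAlgebra.of R)) :=
    lieSpan_range_of (R := R) ▸ LieSubalgebra.mem_top u
  induction hu using LieSubalgebra.lieSpan_induction with
  | mem _ h => obtain ⟨i, rfl⟩ := h; exact of i
  | zero => exact zero
  | add u v _ _ hu hv => exact add u v hu hv
  | smul c u _ hu => exact smul c u hu
  | lie u v _ _ hu hv => exact lie u v hu hv

section

variable {M : Type*} [AddCommGroup M] [Module R M] [LieRingModule (FreeLieAlgebra R X) M]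
  [LieModule R (FreeLieAlgebra R X) M]

theorem lieDerivation_ext_of {D D' : LieDerivation R (FreeLieAlgebra R X) M}
    (h : ∀ i, D (of R i) = D' (of R i)) : D = D' :=
  LieDerivation.ext_of_lieSpan_eq_top _ lieSpan_range_of (Set.forall_mem_range.2 h)

/-- The representation of the free Lie algebra on `M × R` in which the generator `of R i` acts by
`(y, c) ↦ (⁅of R i, y⁆ + c • f i, 0)`. The `M`-component of `u • (0, 1)` is a derivation in `u`. -/
def affineRep (f : X → M) : FreeLieAlgebra R X →ₗ⁅R⁆ Module.End R (M × R) :=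
  lift R fun i ↦
    ((LieModule.toEnd R _ M (of R i)).coprod (LinearMap.toSpanSingleton R M (f i))).prod 0

theorem exists_affineRep_apply (f : X → M) (u : FreeLieAlgebra R X) :
    ∃ m : M, ∀ (y : M) (c : R), affineRep f u (y, c) = (⁅u, y⁆ + c • m, 0) := by
  induction u using freeLieAlgebra_induction with
  | of i => exact ⟨f i, by simp [affineRep]⟩
  | zero => exact ⟨0, by simp [Prod.ext_iff]⟩
  | add u v hu hv =>
    obtain ⟨m, hu⟩ := hu
    obtain ⟨n, hv⟩ := hv
    refine ⟨m + n, fun y c ↦ ?_⟩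
    simp only [map_add, LinearMap.add_apply, hu, hv, Prod.mk_add_mk, add_lie, add_zero]
    congr 1
    module
  | smul t u hu =>
    obtain ⟨m, hu⟩ := hu
    refine ⟨t • m, fun y c ↦ ?_⟩
    simp only [map_smul, LinearMap.smul_apply, hu, Prod.smul_mk, smul_lie, smul_zero]
    congr 1
    module
  | lie u v hu hv =>
    obtain ⟨m, hu⟩ := hu
    obtain ⟨n, hv⟩ := hv
    refine ⟨⁅u, n⁆ - ⁅v, m⁆, fun y c ↦ ?_⟩
    simp only [LieHom.map_lie, Ring.lie_def, LinearMap.sub_apply, Module.End.mul_apply, hu, hv,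
      lie_add, lie_smul, lie_lie, zero_smul, add_zero, Prod.mk_sub_mk, sub_zero]
    congr 1
    module

variable (R) in
/-- The derivation of the free Lie algebra into a module with prescribed values on the generators,
read off from `affineRep`. -/
def freeDerivation (f : X → M) : LieDerivation R (FreeLieAlgebra R X) M where
  toFun u := (affineRep f u (0, 1)).1
  map_add' u v := by simp
  map_smul' t u := by simp
  leibniz' u v := by
    obtain ⟨m, hu⟩ := exists_affineRep_apply f u
    obtain ⟨n, hv⟩ := exists_affineRep_apply f v
    simp [Ring.lie_def, hu, hv]

theorem freeDerivation_of (f : X → M) (i : X) : freeDerivation R f (of R i) = f i := by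
  simp [freeDerivation, affineRep]

end

/-- The free Lie algebra acts on the free associative algebra by left multiplication. -/
instance freeAlgebraLieRingModule : LieRingModule (FreeLieAlgebra R X) (FreeAlgebra R X) :=
  LieRingModule.compLieHom _ (lift R fun i ↦ LinearMap.mulLeft R (FreeAlgebra.ι R i))

instance freeAlgebraLieModule : LieModule R (FreeLieAlgebra R X) (FreeAlgebra R X) :=
  LieModule.compLieHom _ (lift R fun i ↦ LinearMap.mulLeft R (FreeAlgebra.ι R i))

theorem of_lie_freeAlgebra (i : X) (w : FreeAlgebra R X) :
    ⁅of R i, w⁆ = FreeAlgebra.ι R i * w := by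
  change (lift R fun i ↦ LinearMap.mulLeft R (FreeAlgebra.ι R i)) (of R i) w = _
  rw [lift_of_apply, LinearMap.mulLeft_apply]

/-- The extension of the adjoint representation to the free associative algebra, the enveloping
algebra of the free Lie algebra. -/
def freeAlgebraAd : FreeAlgebra R X →ₐ[R] Module.End R (FreeLieAlgebra R X) :=
  FreeAlgebra.lift R fun i ↦ LieAlgebra.ad R _ (of R i)

theorem freeAlgebraAd_lie (u y : FreeLieAlgebra R X) (w : FreeAlgebra R X) :
    freeAlgebraAd ⁅u, w⁆ y = ⁅u, freeAlgebraAd w y⁆ := by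
  induction u using freeLieAlgebra_induction generalizing w with
  | of i => simp [of_lie_freeAlgebra, freeAlgebraAd]
  | zero => simp
  | add u v hu hv => simp [hu, hv]
  | smul t u hu => simp [hu]
  | lie u v hu hv => simp [hu, hv]

variable [DecidableEq X]

variable (R) in
/-- The Fox derivative with respect to the generator `of R j`: of the words of `u` in the free
associative algebra it keeps those ending in `of R j`, with that last letter removed. -/
def foxDerivative (j : X) : LieDerivation R (FreeLieAlgebra R X) (FreeAlgebra R X) :=
  freeDerivation R (Pi.single j 1)

variable (R) in
/-- The derivation multiplying each bracket monomial by the number of occurrences of `of R j`. -/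
def degreeDerivation (j : X) : LieDerivation R (FreeLieAlgebra R X) (FreeLieAlgebra R X) :=
  freeDerivation R (Pi.single j (of R j))

theorem degreeDerivation_of_self (j : X) : degreeDerivation R j (of R j) = of R j := by
  simp [degreeDerivation, freeDerivation_of]

theorem degreeDerivation_of_ne {i j : X} (hij : i ≠ j) : degreeDerivation R j (of R i) = 0 := by
  simp [degreeDerivation, freeDerivation_of, hij]

theorem degreeDerivation_apply (j : X) (u : FreeLieAlgebra R X) :
    degreeDerivation R j u = freeAlgebraAd (foxDerivative R j u) (of R j) := by
  induction u using freeLieAlgebra_induction with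
  | of i =>
    obtain rfl | hij := eq_or_ne i j
    · simp [degreeDerivation, foxDerivative, freeDerivation_of]
    · simp [degreeDerivation, foxDerivative, freeDerivation_of, hij]
  | zero => simp
  | add u v hu hv => simp [hu, hv]
  | smul t u hu => simp [hu]
  | lie u v hu hv => simp [hu, hv, freeAlgebraAd_lie]

theorem degreeDerivation_eq_zero_of_commute [NoZeroDivisors R] [Nontrivial R] {i j : X}
    (hij : i ≠ j) {u : FreeLieAlgebra R X} (hu : ⁅of R i, u⁆ = 0) : degreeDerivation R j u = 0 := by
  have fox_of : foxDerivative R j (of R i) = 0 := by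
    simp [foxDerivative, freeDerivation_of, hij]
  have : FreeAlgebra.ι R i * foxDerivative R j u = 0 := by
    simpa [fox_of, of_lie_freeAlgebra] using congrArg (foxDerivative R j) hu
  have : foxDerivative R j u = 0 := (mul_eq_zero.1 this).resolve_left (FreeAlgebra.ι_ne_zero i)
  simp [degreeDerivation_apply, this]

theorem lieDerivation_eq_zero_of_apply_lie_of {K : Type*} [Field K] {i j : X} (hij : i ≠ j)
    {D : LieDerivation K (FreeLieAlgebra K X) (FreeLieAlgebra K X)}
    (hD : ∀ k, k ≠ j → D (of K k) = 0) (hlie : D ⁅of K i, of K j⁆ = 0) {r : K}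
    (hr : r + 1 ≠ 0) (hdeg : ⁅degreeDerivation K j, D⁆ = r • D) : D = 0 := by
  have commute : ⁅of K i, D (of K j)⁆ = 0 := by
    simpa only [LieDerivation.apply_lie_eq_sub, hD i hij, lie_zero, sub_zero] using hlie
  have homogeneous : degreeDerivation K j (D (of K j)) = (r + 1) • D (of K j) := by
    have h := LieDerivation.congr_fun hdeg (of K j)
    rw [LieDerivation.lie_apply, degreeDerivation_of_self, LieDerivation.smul_apply] at h
    rw [add_smul, one_smul, ← h, sub_add_cancel]
  have apply_of_self : D (of K j) = 0 := by
    rw [degreeDerivation_eq_zero_of_commute hij commute] at homogeneous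
    exact (smul_eq_zero.1 homogeneous.symm).resolve_left hr
  refine lieDerivation_ext_of fun k ↦ ?_
  obtain rfl | hkj := eq_or_ne k j
  · exact apply_of_self
  · exact hD k hkj

end FreeLieAlgebraDerivations

section AdjointSequences

variable {R L : Type*} [CommRing R] [LieRing L] [LieAlgebra R L] {a : L} {x : ℕ → L}

open Finset

theorem lie_alternating_sum (hx : ∀ i, x (i + 1) = ⁅a, x i⁆) (N : ℕ) :
    ⁅a, ∑ i ∈ range (N + 1), (-1 : R) ^ i • ⁅x i, x (N - i)⁆⁆ =
      ⁅x 0, x (N + 1)⁆ + (-1 : R) ^ N • ⁅x (N + 1), x 0⁆ := by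
  let term (i : ℕ) : L := (-1 : R) ^ i • ⁅x i, x (N + 1 - i)⁆
  have lie_summand : ∀ i ∈ range (N + 1),
      ⁅a, (-1 : R) ^ i • ⁅x i, x (N - i)⁆⁆ = term i - term (i + 1) := by
    intro i hi
    have leibniz : ⁅a, ⁅x i, x (N - i)⁆⁆ = ⁅x (i + 1), x (N - i)⁆ + ⁅x i, x (N + 1 - i)⁆ := by
      rw [leibniz_lie, ← hx, ← hx, Nat.sub_add_comm (Nat.lt_succ_iff.1 (mem_range.1 hi))]
    rw [lie_smul, leibniz]
    simp only [term, pow_succ, Nat.add_sub_add_right]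
    module
  rw [lie_sum, sum_congr rfl lie_summand, sum_range_sub']
  simp [term, pow_succ]

/-- The value at `x (k + 1)` of a derivation which maps `a` to `x m` and kills `x 1`, for a sequence
with `x (i + 1) = ⁅a, x i⁆`. -/
def binomialBracketSum (x : ℕ → L) (m k : ℕ) : L :=
  ∑ p ∈ antidiagonal k, k.choose (p.1 + 1) • ⁅x (m + p.1), x p.2⁆

theorem binomialBracketSum_succ (hx : ∀ i, x (i + 1) = ⁅a, x i⁆) (m k : ℕ) :
    binomialBracketSum x m (k + 1) = ⁅x m, x (k + 1)⁆ + ⁅a, binomialBracketSum x m k⁆ := by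
  have pascal : binomialBracketSum x m (k + 1) =
      ∑ p ∈ antidiagonal (k + 1), k.choose p.1 • ⁅x (m + p.1), x p.2⁆ +
        ∑ p ∈ antidiagonal (k + 1), k.choose (p.1 + 1) • ⁅x (m + p.1), x p.2⁆ := by
    simp only [binomialBracketSum, Nat.choose_succ_succ', add_smul, sum_add_distrib]
  have leibniz : ⁅a, binomialBracketSum x m k⁆ =
      ∑ p ∈ antidiagonal k, k.choose (p.1 + 1) • ⁅x (m + (p.1 + 1)), x p.2⁆ +
        ∑ p ∈ antidiagonal k, k.choose (p.1 + 1) • ⁅x (m + p.1), x (p.2 + 1)⁆ := by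
    simp only [binomialBracketSum, lie_sum, lie_nsmul, leibniz_lie a, ← hx, smul_add,
      sum_add_distrib, add_assoc]
  rw [pascal, leibniz, Nat.sum_antidiagonal_succ, Nat.sum_antidiagonal_succ',
    Nat.choose_eq_zero_of_lt (by lia : k < k + 1 + 1)]
  simp only [Nat.choose_zero_right, one_smul, zero_smul, add_zero, zero_add, add_assoc]

theorem lieDerivation_apply_adjoint_seq (D : LieDerivation R L L)
    (hx : ∀ i, x (i + 1) = ⁅a, x i⁆) {m : ℕ} (ha : D a = x m) (h1 : D (x 1) = 0) (k : ℕ) :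
    D (x (k + 1)) = binomialBracketSum x m k := by
  induction k with
  | zero => simpa [binomialBracketSum]
  | succ k ih =>
    rw [hx, LieDerivation.apply_lie_eq_add, ha, ih, binomialBracketSum_succ hx, add_comm]

-- The coefficients come from the even period polynomial X⁸Y² - 3X⁶Y⁴ + 3X⁴Y⁶ - X²Y⁸ of weight 12.
theorem pollack_identity (x : ℕ → L) :
    (binomialBracketSum x 10 3 - binomialBracketSum x 4 9) -
      3 • (binomialBracketSum x 8 5 - binomialBracketSum x 6 7) = 0 := by
  have swap : ∀ i j, j < i → ⁅x i, x j⁆ = -⁅x j, x i⁆ := fun i j _ ↦ (lie_skew _ _).symm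
  simp only [binomialBracketSum, Nat.sum_antidiagonal_eq_sum_range_succ_mk, sum_range_succ,
    sum_range_zero, Nat.choose, Nat.reduceAdd, Nat.reduceSub]
  simp (disch := decide) only [swap]
  module

end AdjointSequences

/-- The element `ad(𝖺)^i 𝖻`. -/
def adGen (i : ℕ) : L2 := (adL ga ^ i) gb

theorem adGen_succ (i : ℕ) : adGen (i + 1) = ⁅ga, adGen i⁆ := by
  rw [adGen, pow_succ', Module.End.mul_apply]
  rfl

/-- The derivation of `L2` counting the occurrences of `𝖻`. -/
def gbDegree : LieDerivation ℚ L2 L2 := degreeDerivation ℚ 1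

theorem gbDegree_ga : gbDegree ga = 0 :=
  degreeDerivation_of_ne (by decide)

theorem gbDegree_gb : gbDegree gb = gb :=
  degreeDerivation_of_self 1

theorem gbDegree_adGen (i : ℕ) : gbDegree (adGen i) = adGen i := by
  induction i with
  | zero => exact gbDegree_gb
  | succ i ih => simp [adGen_succ, ih, gbDegree_ga]

theorem lieDerivation_L2_ext {D D' : LieDerivation ℚ L2 L2} (ha : D ga = D' ga)
    (hb : D gb = D' gb) : D = D' :=
  lieDerivation_ext_of (Fin.forall_fin_two.2 ⟨ha, hb⟩)

namespace IsEpsDual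

variable {m n : ℕ} {D D' : LieDerivation ℚ L2 L2}

theorem apply_ga (h : IsEpsDual n D) : D ga = adGen (2 * n + 2) :=
  h.1

theorem apply_gb (h : IsEpsDual n D) :
    D gb = (1 / 2 : ℚ) • ∑ i ∈ Finset.range (2 * n + 1 + 1),
      (-1 : ℚ) ^ i • ⁅adGen i, adGen (2 * n + 1 - i)⁆ :=
  h.2

theorem apply_lie_ga_gb (h : IsEpsDual n D) : D ⁅ga, gb⁆ = 0 := by
  have lie_apply_gb : ⁅ga, D gb⁆ = ⁅gb, D ga⁆ := by
    rw [h.apply_gb, h.apply_ga, lie_smul, lie_alternating_sum adGen_succ,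
      Odd.neg_one_pow ⟨n, rfl⟩, ← lie_skew (adGen (2 * n + 1 + 1))]
    change _ = ⁅adGen 0, adGen (2 * n + 2)⁆
    module
  rw [LieDerivation.apply_lie_eq_sub, lie_apply_gb, sub_self]

theorem apply_adGen (h : IsEpsDual n D) (k : ℕ) :
    D (adGen (k + 1)) = binomialBracketSum adGen (2 * n + 2) k :=
  lieDerivation_apply_adjoint_seq D adGen_succ h.apply_ga
    ((congrArg D (adGen_succ 0)).trans h.apply_lie_ga_gb) k

theorem lie_apply_ga (h : IsEpsDual m D) (h' : IsEpsDual n D') :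
    ⁅D, D'⁆ ga = binomialBracketSum adGen (2 * m + 2) (2 * n + 1) -
      binomialBracketSum adGen (2 * n + 2) (2 * m + 1) := by
  rw [LieDerivation.lie_apply, h.apply_ga, h'.apply_ga, h.apply_adGen, h'.apply_adGen]

theorem lie_apply_lie_ga_gb (h : IsEpsDual m D) (h' : IsEpsDual n D') :
    ⁅D, D'⁆ ⁅ga, gb⁆ = 0 := by
  rw [LieDerivation.lie_apply, h.apply_lie_ga_gb, h'.apply_lie_ga_gb, map_zero, map_zero, sub_zero]

theorem lie_gbDegree (h : IsEpsDual n D) : ⁅gbDegree, D⁆ = D := by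
  have degree_apply_gb : gbDegree (D gb) = (2 : ℚ) • D gb := by
    simp only [h.apply_gb, map_smul, map_sum, LieDerivation.apply_lie_eq_add, gbDegree_adGen,
      Finset.smul_sum]
    exact Finset.sum_congr rfl fun i _ ↦ by module
  refine lieDerivation_L2_ext ?_ ?_
  · rw [LieDerivation.lie_apply, gbDegree_ga, map_zero, sub_zero, h.apply_ga, gbDegree_adGen]
  · rw [LieDerivation.lie_apply, gbDegree_gb, degree_apply_gb, two_smul, add_sub_cancel_right]

theorem gbDegree_lie_lie (h : IsEpsDual m D) (h' : IsEpsDual n D') :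
    ⁅gbDegree, ⁅D, D'⁆⁆ = (2 : ℚ) • ⁅D, D'⁆ := by
  rw [leibniz_lie, h.lie_gbDegree, h'.lie_gbDegree, two_smul]

end IsEpsDual

theorem pollack_relation_depth_two_weight_twelve
    (D4 D6 D8 D10 : LieDerivation ℚ L2 L2)
    (h4 : IsEpsDual 1 D4) (h6 : IsEpsDual 2 D6)
    (h8 : IsEpsDual 3 D8) (h10 : IsEpsDual 4 D10) :
    ⁅D10, D4⁆ - 3 • ⁅D8, D6⁆ = 0 := by
  have apply_ga : (⁅D10, D4⁆ - 3 • ⁅D8, D6⁆) ga = 0 := by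
    rw [LieDerivation.sub_apply, LieDerivation.smul_apply, h10.lie_apply_ga h4, h8.lie_apply_ga h6]
    exact pollack_identity adGen
  have apply_lie : (⁅D10, D4⁆ - 3 • ⁅D8, D6⁆) ⁅ga, gb⁆ = 0 := by
    rw [LieDerivation.sub_apply, LieDerivation.smul_apply, h10.lie_apply_lie_ga_gb h4,
      h8.lie_apply_lie_ga_gb h6, smul_zero, sub_zero]
  have degree_two : ⁅gbDegree, ⁅D10, D4⁆ - 3 • ⁅D8, D6⁆⁆ =
      (2 : ℚ) • (⁅D10, D4⁆ - 3 • ⁅D8, D6⁆) := by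
    rw [lie_sub, lie_nsmul, h10.gbDegree_lie_lie h4, h8.gbDegree_lie_lie h6]
    module
  exact lieDerivation_eq_zero_of_apply_lie_of (i := 0) (j := 1) (by decide)
    (Fin.forall_fin_two.2 ⟨fun _ ↦ apply_ga, fun h ↦ absurd rfl h⟩) apply_lie (by norm_num)
    degree_two
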